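/- For all T > 0, ξ ∈ ℝ^d, a ∈ Ω and x ∈ ℤ^d, the oscillation of the modified corrector at the origin with respect to the coefficient at x satisfies osc_{a(x)} φ_T(a;0) ≤ C(d,λ) |∇_x G_T(a;0,x)| |∇φ_T(a;x) + ξ|, with a constant depending only on d and λ. -/

import Mathlib

/-!
Let `b` agree with `a` outside `x` and put `u = φ_T(b) - φ_T(a)`. Subtracting the two corrector
equations gives

`(1/T) u + ∇*(a∇u) = -∇*(h δ_x)`, `h = (b(x) - a(x)) (∇φ_T(b;x) + ξ)`,

see `corrector_diff`. Bounded solutions of the massive equation are unique (`bounded_unique`, an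
energy estimate with the exponential weight `r^{|x|₁}`; the matrices need be neither diagonal nor
symmetric, so no maximum principle is available). Hence `u(0) = -h · ∇G_T(a;0,x)`, where the
gradient acts on the pole, and `u` is square summable (`green_representation`).

It remains to replace `∇φ_T(b;x) + ξ` by `∇φ_T(a;x) + ξ`. With the roles of `a` and `b` exchanged,
`-u` solves the equation with coefficients `b` and right-hand side `-∇*(k δ_x)`,
`|k| ≤ 2 |∇φ_T(a;x) + ξ|`. Testing with `-u` gives `λ |∇u(x)| ≤ |k|` (`energy_estimate`), so
`|∇φ_T(b;x) + ξ| ≤ (1 + 2/λ) |∇φ_T(a;x) + ξ|`. Thus `|u(0)|` is at most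
`2 (1 + 2/λ) |∇G_T(a;0,x)| |∇φ_T(a;x) + ξ|`, and the oscillation is at most twice that.
-/

open MeasureTheory
open scoped ENNReal

namespace StochHom

noncomputable section


/-- The lattice `ℤ^d`. -/
abbrev Lat (d : ℕ) := Fin d → ℤ

/-- The `i`-th coordinate unit vector of `ℤ^d`. -/
def unitv (d : ℕ) (i : Fin d) : Lat d := fun j => if j = i then 1 else 0

/-- Euclidean norm of a vector in `ℝ^d`. -/
noncomputable def vnorm {d : ℕ} (v : Fin d → ℝ) : ℝ := Real.sqrt (∑ i, (v i) ^ 2)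

/-- Euclidean norm of a lattice point. -/
noncomputable def latnorm {d : ℕ} (x : Lat d) : ℝ := vnorm (fun i => (x i : ℝ))

/-- Discrete gradient `∇u(x) = (u(x+eᵢ) - u(x))ᵢ`. -/
def dgrad {d : ℕ} (u : Lat d → ℝ) (x : Lat d) : Fin d → ℝ :=
  fun i => u (x + unitv d i) - u x

/-- Discrete negative divergence `∇*g(x) = Σᵢ (gᵢ(x-eᵢ) - gᵢ(x))`. -/
def ddiv {d : ℕ} (g : Lat d → Fin d → ℝ) (x : Lat d) : ℝ :=
  ∑ i, (g (x - unitv d i) i - g x i)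

/-- Matrix-vector multiplication for a `d×d` matrix given as `Fin d → Fin d → ℝ`. -/
def mulVec' {d : ℕ} (A : Fin d → Fin d → ℝ) (v : Fin d → ℝ) : Fin d → ℝ :=
  fun i => ∑ j, A i j * v j

/-- The ellipticity condition defining `Ω₀`: `v·Av ≥ λ|v|²` and `|Av| ≤ |v|`. -/
def IsElliptic (d : ℕ) (lam : ℝ) (A : Fin d → Fin d → ℝ) : Prop :=
  (∀ v : Fin d → ℝ, lam * ∑ i, (v i) ^ 2 ≤ ∑ i, v i * mulVec' A v i) ∧
  (∀ v : Fin d → ℝ, vnorm (mulVec' A v) ≤ vnorm v)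

/-- The space `Ω = Ω₀^{ℤ^d}` of admissible coefficient fields. -/
abbrev Coeff (d : ℕ) (lam : ℝ) :=
  {a : Lat d → Fin d → Fin d → ℝ // ∀ x, IsElliptic d lam (a x)}

/-- Shift of a coefficient field: `(τ_z a)(x) = a(x+z)`. -/
def shift {d : ℕ} {lam : ℝ} (z : Lat d) (a : Coeff d lam) : Coeff d lam :=
  ⟨fun x => a.1 (x + z), fun x => a.2 (x + z)⟩

/-- Stationarity of an ensemble: every shift is measure preserving. -/
def Stationary {d : ℕ} {lam : ℝ} (μ : Measure (Coeff d lam)) : Prop :=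
  ∀ z : Lat d, MeasurePreserving (shift z) μ μ

/-- Coefficient fields agreeing with `a` outside of `x`. -/
def sameOutside {d : ℕ} {lam : ℝ} (a : Coeff d lam) (x : Lat d) :
    Set (Coeff d lam) :=
  {b | ∀ y, y ≠ x → b.1 y = a.1 y}

/-- The oscillation `osc_{a(x)} ζ`. -/
noncomputable def osc {d : ℕ} {lam : ℝ} (ζ : Coeff d lam → ℝ) (a : Coeff d lam)
    (x : Lat d) : ℝ :=
  sSup (ζ '' sameOutside a x) - sInf (ζ '' sameOutside a x)

/-- Membership in `C_b(Ω)`: bounded continuous functions. -/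
def MemCb {d : ℕ} {lam : ℝ} (ζ : Coeff d lam → ℝ) : Prop :=
  Continuous ζ ∧ ∃ M, ∀ a, |ζ a| ≤ M

/-- The logarithmic Sobolev inequality with constant `ρ`. -/
def SatisfiesLSI {d : ℕ} {lam : ℝ} (μ : Measure (Coeff d lam)) (ρ : ℝ) : Prop :=
  ∀ ζ : Coeff d lam → ℝ, MemCb ζ →
    ∫ a, (ζ a) ^ 2 * Real.log ((ζ a) ^ 2 / ∫ b, (ζ b) ^ 2 ∂μ) ∂μ
      ≤ (1 / (2 * ρ)) * ∫ a, ∑' x : Lat d, (osc ζ a x) ^ 2 ∂μ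

/-- The spectral gap inequality with constant `ρ`. -/
def SatisfiesSG {d : ℕ} {lam : ℝ} (μ : Measure (Coeff d lam)) (ρ : ℝ) : Prop :=
  ∀ ζ : Coeff d lam → ℝ, MemCb ζ →
    ∫ a, (ζ a - ∫ b, ζ b ∂μ) ^ 2 ∂μ
      ≤ (1 / ρ) * ∫ a, ∑' x : Lat d, (osc ζ a x) ^ 2 ∂μ

/-- `φ` is a bounded solution of the modified corrector equation
`(1/T)φ + ∇*(a∇φ) = -∇*(aξ)` on `ℤ^d`. -/
def IsModCorrector (d : ℕ) (T : ℝ) (ξ : Fin d → ℝ)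
    (a : Lat d → Fin d → Fin d → ℝ) (φ : Lat d → ℝ) : Prop :=
  (∃ M, ∀ x, |φ x| ≤ M) ∧
  ∀ x, (1 / T) * φ x + ddiv (fun y => mulVec' (a y) (dgrad φ y)) x
      = - ddiv (fun y => mulVec' (a y) ξ) x

/-- `G` is the `ℓ²` Green's function of `(1/T) + ∇*(a∇·)` with pole at `y`. -/
def IsGreen (d : ℕ) (T : ℝ) (a : Lat d → Fin d → Fin d → ℝ) (y : Lat d)
    (G : Lat d → ℝ) : Prop :=
  Summable (fun x => (G x) ^ 2) ∧
  ∀ x, (1 / T) * G x + ddiv (fun z => mulVec' (a z) (dgrad G z)) x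
      = if x = y then 1 else 0

/-- Spectral norm (Euclidean operator norm) of a `d×d` matrix. -/
noncomputable def specNorm {d : ℕ} (A : Fin d → Fin d → ℝ) : ℝ :=
  sSup {r : ℝ | ∃ v : Fin d → ℝ, vnorm v ≤ 1 ∧ r = vnorm (mulVec' A v)}

/-! ### Euclidean norm -/

lemma vnorm_sq {d : ℕ} (v : Fin d → ℝ) : vnorm v ^ 2 = ∑ i, (v i) ^ 2 :=
  Real.sq_sqrt (Finset.sum_nonneg fun _ _ => sq_nonneg _)

lemma vnorm_nonneg {d : ℕ} (v : Fin d → ℝ) : 0 ≤ vnorm v := Real.sqrt_nonneg _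

lemma vnorm_eq_norm {d : ℕ} (v : Fin d → ℝ) : vnorm v = ‖WithLp.toLp 2 v‖ := by
  simp [EuclideanSpace.norm_eq, vnorm]

lemma vnorm_add_le {d : ℕ} (v w : Fin d → ℝ) : vnorm (v + w) ≤ vnorm v + vnorm w := by
  simp only [vnorm_eq_norm, WithLp.toLp_add]
  exact norm_add_le _ _

lemma vnorm_sub_le {d : ℕ} (v w : Fin d → ℝ) : vnorm (v - w) ≤ vnorm v + vnorm w := by
  simp only [vnorm_eq_norm, WithLp.toLp_sub]
  exact norm_sub_le _ _

lemma abs_sum_mul_le {d : ℕ} (v w : Fin d → ℝ) :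
    |∑ i, v i * w i| ≤ vnorm v * vnorm w := by
  rw [abs_le]
  constructor
  · have h := Real.sum_mul_le_sqrt_mul_sqrt Finset.univ (fun i => - v i) w
    simp only [neg_mul, Finset.sum_neg_distrib, neg_sq] at h
    unfold vnorm
    linarith
  · exact Real.sum_mul_le_sqrt_mul_sqrt Finset.univ v w

/-! ### Summation by parts -/

/-- Discrete summation by parts, `∑ w ∇*F = ∑ ∇w · F`, including convergence of both series. -/
lemma summation_by_parts {d : ℕ} (w : Lat d → ℝ) (F : Lat d → Fin d → ℝ)
    (h₁ : ∀ i, Summable fun x => w x * F x i)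
    (h₂ : ∀ i, Summable fun x => w (x + unitv d i) * F x i) :
    ∃ s, HasSum (fun x => w x * ddiv F x) s ∧
      HasSum (fun x => ∑ i, dgrad w x i * F x i) s := by
  refine ⟨∑ i, ((∑' x, w (x + unitv d i) * F x i) - ∑' x, w x * F x i), ?_, ?_⟩
  · have key : ∀ i ∈ Finset.univ, HasSum
        (fun x => w x * F (x - unitv d i) i - w x * F x i)
        ((∑' x, w (x + unitv d i) * F x i) - ∑' x, w x * F x i) := by
      intro i _
      refine HasSum.sub ?_ (h₁ i).hasSum
      have h := (Equiv.subRight (unitv d i)).hasSum_iff.mpr (h₂ i).hasSum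
      simpa [Function.comp_def] using h
    have := hasSum_sum key
    simpa only [ddiv, Finset.mul_sum, mul_sub] using this
  · have key : ∀ i ∈ Finset.univ, HasSum
        (fun x => w (x + unitv d i) * F x i - w x * F x i)
        ((∑' x, w (x + unitv d i) * F x i) - ∑' x, w x * F x i) :=
      fun i _ => (h₂ i).hasSum.sub (h₁ i).hasSum
    have := hasSum_sum key
    simpa only [dgrad, sub_mul] using this

lemma hasSum_shift {d : ℕ} {f : Lat d → ℝ} {s : ℝ} (hf : HasSum f s) (z : Lat d) :
    HasSum (fun x => f (x + z)) s :=
  (Equiv.addRight z).hasSum_iff.mpr hf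

/-! ### An exponential weight on the lattice -/

/-- The weight `r^{|x|₁}` on `ℤ^d`. -/
def wt {d : ℕ} (r : ℝ) (x : Lat d) : ℝ := ∏ i, r ^ (x i).natAbs

lemma wt_pos {d : ℕ} {r : ℝ} (hr : 0 < r) (x : Lat d) : 0 < wt r x :=
  Finset.prod_pos fun _ _ => pow_pos hr _

lemma wt_summable {r : ℝ} (hr : 0 < r) (hr1 : r < 1) (d : ℕ) :
    Summable (fun x : Lat d => wt r x) := by
  have h1 : Summable (fun n : ℤ => r ^ n.natAbs) := by
    have := summable_geometric_of_lt_one hr.le hr1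
    refine Summable.of_nat_of_neg ?_ ?_ <;> simpa using this
  induction d with
  | zero => exact Summable.of_finite
  | succ n ih =>
    have h := h1.mul_of_nonneg ih (fun _ => by positivity) (fun x => (wt_pos hr x).le)
    rw [← (Fin.consEquiv (fun _ : Fin (n + 1) => ℤ)).summable_iff]
    refine h.congr fun p => ?_
    simp [wt, Fin.prod_univ_succ, Fin.consEquiv]

/-- If `y` differs from `x` only in the coordinate `i`, and `|y_i| ≤ |x_i| + 1`, the weight drops by
at most the factor `r`. -/
lemma wt_compare {d : ℕ} {r : ℝ} (hr : 0 < r) (hr1 : r < 1) (x y : Lat d) (i : Fin d)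
    (hne : ∀ j, j ≠ i → y j = x j) (hi : (y i).natAbs ≤ (x i).natAbs + 1) :
    r * wt r x ≤ wt r y := by
  unfold wt
  rw [← Finset.mul_prod_erase _ _ (Finset.mem_univ i),
    ← Finset.mul_prod_erase _ (fun j => r ^ (y j).natAbs) (Finset.mem_univ i)]
  have e : ∏ j ∈ Finset.univ.erase i, r ^ (y j).natAbs
      = ∏ j ∈ Finset.univ.erase i, r ^ (x j).natAbs :=
    Finset.prod_congr rfl fun j hj => by rw [hne j (Finset.ne_of_mem_erase hj)]
  rw [e, ← mul_assoc, ← pow_succ']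
  exact mul_le_mul_of_nonneg_right (pow_le_pow_of_le_one hr.le hr1.le hi)
    (Finset.prod_nonneg fun _ _ => by positivity)

lemma wt_shift_lower {d : ℕ} {r : ℝ} (hr : 0 < r) (hr1 : r < 1) (x : Lat d) (i : Fin d) :
    r * wt r x ≤ wt r (x + unitv d i) :=
  wt_compare hr hr1 _ _ i (fun j hj => by simp [unitv, hj]) (by simp [unitv]; omega)

lemma wt_shift_upper {d : ℕ} {r : ℝ} (hr : 0 < r) (hr1 : r < 1) (x : Lat d) (i : Fin d) :
    r * wt r (x + unitv d i) ≤ wt r x :=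
  wt_compare hr hr1 _ _ i (fun j hj => by simp [unitv, hj]) (by simp [unitv]; omega)

/-! ### Uniqueness of bounded solutions -/

lemma elliptic_nonneg {d : ℕ} {lam : ℝ} (hlam : 0 < lam) {A : Fin d → Fin d → ℝ}
    (hA : IsElliptic d lam A) (v : Fin d → ℝ) : 0 ≤ ∑ i, v i * mulVec' A v i :=
  le_trans (mul_nonneg hlam.le (Finset.sum_nonneg fun _ _ => sq_nonneg _)) (hA.1 v)

lemma elliptic_sq_le {d : ℕ} {lam : ℝ} {A : Fin d → Fin d → ℝ}
    (hA : IsElliptic d lam A) (v : Fin d → ℝ) :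
    ∑ i, (mulVec' A v i) ^ 2 ≤ ∑ i, (v i) ^ 2 := by
  rw [← vnorm_sq, ← vnorm_sq]
  exact pow_le_pow_left₀ (vnorm_nonneg _) (hA.2 v) 2

/-- The only bounded solution of the homogeneous equation is zero. Testing with `ω v`, where
`ω = r^{|x|₁}` and `1 - r` is small in terms of `d` and `T`, the terms falling on `∇ω` are
absorbed by the massive term `(1/T) ∑ ω v²`. -/
lemma bounded_unique {d : ℕ} {lam T : ℝ} (hlam : 0 < lam) (hT : 0 < T) (a : Coeff d lam)
    (v : Lat d → ℝ) (hb : ∃ M, ∀ x, |v x| ≤ M)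
    (hv : ∀ x, (1 / T) * v x + ddiv (fun y => mulVec' (a.1 y) (dgrad v y)) x = 0) :
    ∀ x, v x = 0 := by
  obtain ⟨M, hM⟩ := hb
  have hM0 : 0 ≤ M := le_trans (abs_nonneg _) (hM 0)
  -- `1 / r = 1 + δ` with `4 d δ T < 1`
  set δ : ℝ := 1 / (8 * d * T + 1) with hδ
  have hden : (0 : ℝ) < 8 * d * T + 1 := by positivity
  have hδ0 : 0 < δ := by positivity
  have hδ1 : δ ≤ 1 := by
    rw [hδ, div_le_one hden]
    have : (0 : ℝ) ≤ 8 * d * T := by positivity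
    linarith
  have hδT : 4 * d * δ * T < 1 := by
    have e : δ * (8 * d * T + 1) = 1 := by rw [hδ]; field_simp
    nlinarith [mul_nonneg (mul_nonneg (Nat.cast_nonneg (α := ℝ) d) hδ0.le) hT.le]
  set r : ℝ := 1 / (1 + δ) with hr
  have hr0 : 0 < r := by positivity
  have hr1 : r < 1 := by rw [hr, div_lt_one (by positivity)]; linarith
  have hrδ : (1 + δ) * r = 1 := by rw [hr]; field_simp
  set ω : Lat d → ℝ := fun x => wt r x with hω
  have ω0 : ∀ x, 0 < ω x := fun x => wt_pos hr0 x
  have ωs : Summable ω := wt_summable hr0 hr1 d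
  have ωup : ∀ x i, ω (x + unitv d i) ≤ (1 + δ) * ω x := by
    intro x i
    have h := mul_le_mul_of_nonneg_left (wt_shift_upper hr0 hr1 x i) (by positivity : 0 ≤ 1 + δ)
    rwa [← mul_assoc, hrδ, one_mul] at h
  have ωlo : ∀ x i, ω x ≤ (1 + δ) * ω (x + unitv d i) := by
    intro x i
    have h := mul_le_mul_of_nonneg_left (wt_shift_lower hr0 hr1 x i) (by positivity : 0 ≤ 1 + δ)
    rwa [← mul_assoc, hrδ, one_mul] at h
  have ωd : ∀ x i, |ω (x + unitv d i) - ω x| ≤ δ * ω x := by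
    intro x i
    have h1 := ωup x i
    have h2 := ωlo x i
    rw [abs_le]
    constructor
    · nlinarith [ω0 x, ω0 (x + unitv d i), mul_pos hδ0 hδ0, mul_pos (mul_pos hδ0 hδ0) (ω0 x)]
    · linarith
  set F : Lat d → Fin d → ℝ := fun y => mulVec' (a.1 y) (dgrad v y) with hF
  have Fsq : ∀ x, ∑ i, (F x i) ^ 2 ≤ ∑ i, (2 * v (x + unitv d i) ^ 2 + 2 * v x ^ 2) := by
    intro x
    refine (elliptic_sq_le (a.2 x) _).trans (Finset.sum_le_sum fun i _ => ?_)
    simp only [dgrad]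
    nlinarith [sq_nonneg (v (x + unitv d i) + v x)]
  have vsq : ∀ x, v x ^ 2 ≤ M ^ 2 := fun x => sq_le_sq' (abs_le.mp (hM x)).1 (abs_le.mp (hM x)).2
  have Fb : ∃ N, ∀ x i, |F x i| ≤ N := by
    refine ⟨Real.sqrt (∑ _i : Fin d, (2 * M ^ 2 + 2 * M ^ 2)), fun x i => ?_⟩
    refine Real.abs_le_sqrt ?_
    refine (Finset.single_le_sum (f := fun i => (F x i) ^ 2) (fun _ _ => sq_nonneg _)
      (Finset.mem_univ i)).trans ((Fsq x).trans (Finset.sum_le_sum fun j _ => ?_))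
    linarith [vsq x, vsq (x + unitv d j)]
  obtain ⟨N, hN⟩ := Fb
  have ωss : ∀ i, Summable fun x => ω (x + unitv d i) := fun i =>
    (hasSum_shift ωs.hasSum _).summable
  have bd : ∀ x y i, ‖ω y * v y * F x i‖ ≤ M * N * ω y := by
    intro x y i
    rw [norm_mul, norm_mul, Real.norm_eq_abs, Real.norm_eq_abs, Real.norm_eq_abs,
      abs_of_pos (ω0 y)]
    have h := mul_le_mul (hM y) (hN x i) (abs_nonneg _) hM0
    calc ω y * |v y| * |F x i| = ω y * (|v y| * |F x i|) := by ring
      _ ≤ ω y * (M * N) := mul_le_mul_of_nonneg_left h (ω0 y).le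
      _ = _ := by ring
  obtain ⟨s, hs1, hs2⟩ := summation_by_parts (fun x => ω x * v x) F
    (fun i => Summable.of_norm_bounded (ωs.mul_left (M * N)) fun x => bd x x i)
    (fun i => Summable.of_norm_bounded ((ωss i).mul_left (M * N))
      fun x => bd x (x + unitv d i) i)
  have qs : Summable fun x => ω x * v x ^ 2 := by
    refine Summable.of_norm_bounded (ωs.mul_left (M ^ 2)) fun x => ?_
    rw [Real.norm_of_nonneg (mul_nonneg (ω0 x).le (sq_nonneg _)), mul_comm]
    exact mul_le_mul_of_nonneg_right (vsq x) (ω0 x).le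
  set S := ∑' x, ω x * v x ^ 2 with hS
  have hsS : s = -(1 / T) * S := by
    refine hs1.unique ?_
    have h := qs.hasSum.mul_left (-(1 / T))
    have e : (fun x => ω x * v x * ddiv F x) = fun x => -(1 / T) * (ω x * v x ^ 2) := by
      funext x
      have := hv x
      rw [show ddiv F x = -((1 / T) * v x) by linarith]
      ring
    rw [e]
    exact h
  have lower : HasSum (fun x => -δ * ∑ i, (3 * (ω (x + unitv d i) * v (x + unitv d i) ^ 2)
      + ω x * v x ^ 2)) (-δ * ∑ _i : Fin d, (3 * S + S)) := by
    refine HasSum.mul_left _ (hasSum_sum fun i _ => ?_)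
    refine HasSum.add (HasSum.mul_left _ ?_) qs.hasSum
    exact hasSum_shift qs.hasSum _
  have hle : -δ * ∑ _i : Fin d, (3 * S + S) ≤ s := by
    refine hasSum_le (fun x => ?_) lower hs2
    have e : ∑ i, dgrad (fun x => ω x * v x) x i * F x i
        = ω x * ∑ i, dgrad v x i * F x i
          + ∑ i, (ω (x + unitv d i) - ω x) * (v (x + unitv d i) * F x i) := by
      rw [Finset.mul_sum, ← Finset.sum_add_distrib]
      refine Finset.sum_congr rfl fun i _ => ?_
      simp only [dgrad]; ring
    have p1 : 0 ≤ ω x * ∑ i, dgrad v x i * F x i :=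
      mul_nonneg (ω0 x).le (elliptic_nonneg hlam (a.2 x) _)
    have p2 : ∑ i, (-(δ * ω x) * ((v (x + unitv d i) ^ 2 + F x i ^ 2) / 2)) ≤
        ∑ i, (ω (x + unitv d i) - ω x) * (v (x + unitv d i) * F x i) := by
      refine Finset.sum_le_sum fun i _ => ?_
      have h1 : |v (x + unitv d i) * F x i| ≤ (v (x + unitv d i) ^ 2 + F x i ^ 2) / 2 := by
        rw [abs_le]
        constructor <;> nlinarith [sq_nonneg (v (x + unitv d i) - F x i),
          sq_nonneg (v (x + unitv d i) + F x i)]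
      have h2 := mul_le_mul (ωd x i) h1 (abs_nonneg _) (by have := ω0 x; positivity)
      rw [← abs_mul] at h2
      linarith [neg_abs_le ((ω (x + unitv d i) - ω x) * (v (x + unitv d i) * F x i))]
    have p3 : -δ * ∑ i, (3 * (ω (x + unitv d i) * v (x + unitv d i) ^ 2) + ω x * v x ^ 2) ≤
        ∑ i, (-(δ * ω x) * ((v (x + unitv d i) ^ 2 + F x i ^ 2) / 2)) := by
      rw [← Finset.mul_sum, ← Finset.sum_div,
        Finset.sum_add_distrib (f := fun i => v (x + unitv d i) ^ 2)]
      have h3 : ω x * ((∑ i, v (x + unitv d i) ^ 2 + ∑ i, F x i ^ 2) / 2) ≤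
          ∑ i, (3 * (ω (x + unitv d i) * v (x + unitv d i) ^ 2) + ω x * v x ^ 2) := by
        calc ω x * ((∑ i, v (x + unitv d i) ^ 2 + ∑ i, F x i ^ 2) / 2)
            ≤ ω x * ((∑ i, v (x + unitv d i) ^ 2
                + ∑ i, (2 * v (x + unitv d i) ^ 2 + 2 * v x ^ 2)) / 2) := by
              refine mul_le_mul_of_nonneg_left ?_ (ω0 x).le
              linarith [Fsq x]
          _ = ∑ i, (3 / 2 * (ω x * v (x + unitv d i) ^ 2) + ω x * v x ^ 2) := by
              rw [← Finset.sum_add_distrib, Finset.sum_div, Finset.mul_sum]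
              refine Finset.sum_congr rfl fun i _ => ?_
              ring
          _ ≤ _ := by
              refine Finset.sum_le_sum fun i _ => ?_
              have h4 : ω x ≤ 2 * ω (x + unitv d i) := by
                nlinarith [ωlo x i, ω0 (x + unitv d i)]
              have := mul_le_mul_of_nonneg_right h4 (sq_nonneg (v (x + unitv d i)))
              linarith
      have := mul_le_mul_of_nonneg_left h3 hδ0.le
      linarith
    rw [e]
    linarith
  have S0 : 0 ≤ S := tsum_nonneg fun x => mul_nonneg (ω0 x).le (sq_nonneg _)
  have Sz : S ≤ 0 := by
    simp only [Finset.sum_const, Finset.card_univ, Fintype.card_fin, nsmul_eq_mul] at hle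
    rw [hsS] at hle
    have h5 := mul_le_mul_of_nonneg_left hle hT.le
    have h6 : T * (-(1 / T) * S) = -S := by field_simp
    rw [h6] at h5
    by_contra hc
    push Not at hc
    nlinarith [mul_lt_mul_of_pos_right hδT hc]
  intro x
  have h7 : ω x * v x ^ 2 ≤ 0 :=
    (qs.le_tsum x fun y _ => mul_nonneg (ω0 y).le (sq_nonneg _)).trans Sz
  have h8 : v x ^ 2 ≤ 0 := by
    by_contra hc
    push Not at hc
    linarith [mul_pos (ω0 x) hc]
  exact pow_eq_zero_iff (two_ne_zero) |>.mp (le_antisymm h8 (sq_nonneg _))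

/-! ### The massive operator and square-summable functions -/

lemma mulVec'_add {d : ℕ} (A : Fin d → Fin d → ℝ) (v w : Fin d → ℝ) :
    mulVec' A (v + w) = mulVec' A v + mulVec' A w := by
  funext i
  simp [mulVec', mul_add, Finset.sum_add_distrib]

lemma mulVec'_sub {d : ℕ} (A : Fin d → Fin d → ℝ) (v w : Fin d → ℝ) :
    mulVec' A (v - w) = mulVec' A v - mulVec' A w := by
  funext i
  simp [mulVec', mul_sub, Finset.sum_sub_distrib]

lemma mulVec'_smul {d : ℕ} (A : Fin d → Fin d → ℝ) (c : ℝ) (v : Fin d → ℝ) :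
    mulVec' A (c • v) = c • mulVec' A v := by
  funext i
  simp only [mulVec', Pi.smul_apply, smul_eq_mul, Finset.mul_sum]
  exact Finset.sum_congr rfl fun j _ => by ring

lemma dgrad_add {d : ℕ} (u v : Lat d → ℝ) (x : Lat d) :
    dgrad (u + v) x = dgrad u x + dgrad v x := by
  funext i
  simp only [dgrad, Pi.add_apply]; ring

lemma dgrad_sub {d : ℕ} (u v : Lat d → ℝ) (x : Lat d) :
    dgrad (u - v) x = dgrad u x - dgrad v x := by
  funext i
  simp only [dgrad, Pi.sub_apply]; ring

lemma dgrad_smul {d : ℕ} (c : ℝ) (u : Lat d → ℝ) (x : Lat d) :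
    dgrad (c • u) x = c • dgrad u x := by
  funext i
  simp only [dgrad, Pi.smul_apply, smul_eq_mul]; ring

lemma ddiv_add {d : ℕ} (F K : Lat d → Fin d → ℝ) (x : Lat d) :
    ddiv (fun y => F y + K y) x = ddiv F x + ddiv K x := by
  simp only [ddiv, Pi.add_apply, ← Finset.sum_add_distrib]
  exact Finset.sum_congr rfl fun i _ => by ring

lemma ddiv_smul {d : ℕ} (c : ℝ) (F : Lat d → Fin d → ℝ) (x : Lat d) :
    ddiv (fun y => c • F y) x = c * ddiv F x := by
  simp only [ddiv, Pi.smul_apply, smul_eq_mul, Finset.mul_sum]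
  exact Finset.sum_congr rfl fun i _ => by ring

/-- The operator `1/T + ∇*(a∇·)` as a linear map on all functions on `ℤ^d`. -/
def massOp {d : ℕ} (T : ℝ) (a : Lat d → Fin d → Fin d → ℝ) :
    (Lat d → ℝ) →ₗ[ℝ] (Lat d → ℝ) where
  toFun u x := (1 / T) * u x + ddiv (fun y => mulVec' (a y) (dgrad u y)) x
  map_add' u v := by
    funext x
    simp only [dgrad_add, mulVec'_add, ddiv_add, Pi.add_apply]
    ring
  map_smul' c u := by
    funext x
    simp only [dgrad_smul, mulVec'_smul, ddiv_smul, Pi.smul_apply, smul_eq_mul, RingHom.id_apply]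
    ring

lemma massOp_apply {d : ℕ} (T : ℝ) (a : Lat d → Fin d → Fin d → ℝ) (u : Lat d → ℝ)
    (x : Lat d) :
    massOp T a u x = (1 / T) * u x + ddiv (fun y => mulVec' (a y) (dgrad u y)) x := rfl

/-- The vector field equal to `h` at `x` and vanishing elsewhere. -/
def pointField {d : ℕ} (x : Lat d) (h : Fin d → ℝ) : Lat d → Fin d → ℝ :=
  fun y => if y = x then h else 0

lemma sq_summable_sub {ι : Type*} {f g : ι → ℝ} (hf : Summable fun x => f x ^ 2)
    (hg : Summable fun x => g x ^ 2) : Summable fun x => (f x - g x) ^ 2 :=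
  Summable.of_nonneg_of_le (fun _ => sq_nonneg _)
    (fun x => by nlinarith [sq_nonneg (f x + g x)]) ((hf.mul_left 2).add (hg.mul_left 2))

lemma sq_summable_add {ι : Type*} {f g : ι → ℝ} (hf : Summable fun x => f x ^ 2)
    (hg : Summable fun x => g x ^ 2) : Summable fun x => (f x + g x) ^ 2 :=
  Summable.of_nonneg_of_le (fun _ => sq_nonneg _)
    (fun x => by nlinarith [sq_nonneg (f x - g x)]) ((hf.mul_left 2).add (hg.mul_left 2))

lemma mul_summable_of_sq {ι : Type*} {f g : ι → ℝ} (hf : Summable fun x => f x ^ 2)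
    (hg : Summable fun x => g x ^ 2) : Summable fun x => f x * g x := by
  refine Summable.of_norm_bounded (hf.add hg) fun x => ?_
  rw [Real.norm_eq_abs, abs_le]
  constructor <;> nlinarith [sq_nonneg (f x - g x), sq_nonneg (f x + g x),
    sq_nonneg (f x), sq_nonneg (g x)]

lemma sq_summable_bounded {ι : Type*} {f : ι → ℝ} (hf : Summable fun x => f x ^ 2) :
    ∃ M, ∀ x, |f x| ≤ M :=
  ⟨Real.sqrt (∑' x, f x ^ 2), fun x =>
    Real.abs_le_sqrt (hf.le_tsum x fun _ _ => sq_nonneg _)⟩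

/-! ### Energy estimate -/

/-- Testing the equation with the square-summable solution itself and keeping only the
dissipation at `x`. -/
lemma energy_estimate {d : ℕ} {lam T : ℝ} (hlam : 0 < lam) (hT : 0 < T) (b : Coeff d lam)
    (x : Lat d) (k : Fin d → ℝ) (v : Lat d → ℝ) (hv2 : Summable fun y => v y ^ 2)
    (hv : ∀ y, massOp T b.1 v y = - ddiv (pointField x k) y) :
    lam * vnorm (dgrad v x) ≤ vnorm k := by
  have hshift : ∀ i, Summable fun y => v (y + unitv d i) ^ 2 := fun i =>
    (hasSum_shift hv2.hasSum _).summable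
  set B : Lat d → Fin d → ℝ := fun y => mulVec' (b.1 y) (dgrad v y) with hB
  set F : Lat d → Fin d → ℝ := fun y => B y + pointField x k y with hF
  have hB2 : ∀ i, Summable fun y => B y i ^ 2 := by
    intro i
    refine Summable.of_nonneg_of_le (fun _ => sq_nonneg _)
      (fun y => (Finset.single_le_sum (f := fun i => (B y i) ^ 2) (fun _ _ => sq_nonneg _)
        (Finset.mem_univ i)).trans (elliptic_sq_le (b.2 y) _)) ?_
    refine summable_sum (f := fun j y => dgrad v y j ^ 2) fun j _ => ?_
    exact sq_summable_sub (f := fun y => v (y + unitv d j)) (hshift j) hv2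
  have hK2 : ∀ i, Summable fun y => pointField x k y i ^ 2 := by
    intro i
    refine summable_of_ne_finset_zero (s := {x}) fun y hy => ?_
    simp only [Finset.mem_singleton] at hy
    simp [pointField, hy]
  have hF2 : ∀ i, Summable fun y => F y i ^ 2 := fun i => sq_summable_add (hB2 i) (hK2 i)
  obtain ⟨s, hs1, hs2⟩ := summation_by_parts v F
    (fun i => mul_summable_of_sq hv2 (hF2 i)) (fun i => mul_summable_of_sq (hshift i) (hF2 i))
  have hs : s ≤ 0 := by
    refine hasSum_le (fun y => ?_) hs1 hasSum_zero
    have h1 := hv y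
    rw [massOp_apply] at h1
    have h2 : ddiv F y = -((1 / T) * v y) := by
      rw [hF, ddiv_add]; linarith
    rw [h2]
    have : 0 ≤ (1 / T) * v y ^ 2 := by positivity
    linarith
  have hle : lam * vnorm (dgrad v x) ^ 2 + ∑ i, dgrad v x i * k i ≤ s := by
    refine hasSum_le (fun y => ?_)
      (hasSum_ite_eq x (lam * vnorm (dgrad v x) ^ 2 + ∑ i, dgrad v x i * k i)) hs2
    have e : ∑ i, dgrad v y i * F y i
        = ∑ i, dgrad v y i * B y i + ∑ i, dgrad v y i * pointField x k y i := by
      rw [← Finset.sum_add_distrib]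
      exact Finset.sum_congr rfl fun i _ => by simp only [hF, Pi.add_apply]; ring
    rw [e]
    split_ifs with hy
    · subst hy
      have := (b.2 y).1 (dgrad v y)
      rw [vnorm_sq]
      simp only [pointField, if_true]
      linarith
    · have := elliptic_nonneg hlam (b.2 y) (dgrad v y)
      simpa [pointField, hy] using this
  have hcs := neg_abs_le (∑ i, dgrad v x i * k i)
  have hcs2 := abs_sum_mul_le (dgrad v x) k
  rcases (vnorm_nonneg (dgrad v x)).eq_or_lt with h0 | h0
  · rw [← h0, mul_zero]; exact vnorm_nonneg _
  · refine le_of_mul_le_mul_left ?_ h0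
    nlinarith

/-! ### Changing the coefficient at one site -/

/-- The difference of two correctors whose coefficients differ only at `x` solves an equation
with right-hand side concentrated at `x`. -/
lemma corrector_diff {d : ℕ} {T : ℝ} {ξ : Fin d → ℝ} {a b : Lat d → Fin d → Fin d → ℝ}
    {x : Lat d} (hab : ∀ y, y ≠ x → b y = a y) {φa φb : Lat d → ℝ}
    (ha : IsModCorrector d T ξ a φa) (hb : IsModCorrector d T ξ b φb) (y : Lat d) :
    massOp T a (φb - φa) y = - ddiv (pointField x
      (mulVec' (b x) (dgrad φb x + ξ) - mulVec' (a x) (dgrad φb x + ξ))) y := by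
  have h1 := ha.2 y
  have h2 := hb.2 y
  rw [massOp_apply, eq_neg_iff_add_eq_zero, add_assoc, ← ddiv_add]
  have e : (fun y => mulVec' (a y) (dgrad (φb - φa) y) + pointField x
      (mulVec' (b x) (dgrad φb x + ξ) - mulVec' (a x) (dgrad φb x + ξ)) y)
      = fun y => (mulVec' (b y) (dgrad φb y) + mulVec' (b y) ξ)
        + (-1 : ℝ) • (mulVec' (a y) (dgrad φa y) + mulVec' (a y) ξ) := by
    funext z
    by_cases hz : z = x
    · subst hz
      simp only [pointField, if_true, dgrad_sub, mulVec'_sub, mulVec'_add, neg_one_smul]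
      abel
    · simp only [pointField, if_neg hz, hab z hz, dgrad_sub, mulVec'_sub, neg_one_smul]
      abel
  rw [e, ddiv_add, ddiv_smul, ddiv_add, ddiv_add]
  simp only [Pi.sub_apply]
  linarith

/-- Bounded solutions with right-hand side `-∇*(h δ_x)` are represented by the gradient of the
Green's function in its pole; in particular they are square summable. -/
lemma green_representation {d : ℕ} {lam T : ℝ} (hlam : 0 < lam) (hT : 0 < T) (a : Coeff d lam)
    (G : Lat d → Lat d → ℝ) (hG : ∀ y, IsGreen d T a.1 y (fun z => G z y))
    (x : Lat d) (h : Fin d → ℝ) (u : Lat d → ℝ) (hub : ∃ M, ∀ y, |u y| ≤ M)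
    (hu : ∀ y, massOp T a.1 u y = - ddiv (pointField x h) y) :
    (Summable fun y => u y ^ 2) ∧
      ∀ y, u y = - ∑ i, h i * (G y (x + unitv d i) - G y x) := by
  set w : Lat d → ℝ := ∑ i, h i • ((fun z => G z (x + unitv d i)) - fun z => G z x) with hw
  have hwy : ∀ y, w y = ∑ i, h i * (G y (x + unitv d i) - G y x) := by
    intro y
    simp [hw]
  have hGop : ∀ p y, massOp T a.1 (fun z => G z p) y = if y = p then 1 else 0 :=
    fun p y => (hG p).2 y
  have hwop : ∀ y, massOp T a.1 w y = ddiv (pointField x h) y := by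
    intro y
    simp only [hw, map_sum, map_smul, map_sub, Finset.sum_apply, Pi.smul_apply, Pi.sub_apply,
      smul_eq_mul, hGop, ddiv, pointField]
    refine Finset.sum_congr rfl fun i _ => ?_
    simp only [sub_eq_iff_eq_add]
    split_ifs <;> simp
  have hw2 : Summable fun y => w y ^ 2 := by
    refine Summable.of_nonneg_of_le (fun _ => sq_nonneg _) (fun y => ?_)
      ((summable_sum (s := Finset.univ) fun i _ =>
        sq_summable_sub (hG (x + unitv d i)).1 (hG x).1).mul_left (∑ i, h i ^ 2))
    rw [hwy]
    exact Finset.sum_mul_sq_le_sq_mul_sq _ _ _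
  obtain ⟨M, hM⟩ := hub
  obtain ⟨N, hN⟩ := sq_summable_bounded hw2
  have hz := bounded_unique hlam hT a (u + w)
    ⟨M + N, fun y => (abs_add_le _ _).trans (add_le_add (hM y) (hN y))⟩ (fun y => by
      rw [← massOp_apply, map_add, Pi.add_apply, hu, hwop, neg_add_cancel])
  have huw : ∀ y, u y = - w y := fun y => eq_neg_of_add_eq_zero_left (hz y)
  refine ⟨?_, fun y => by rw [huw, hwy]⟩
  simpa only [huw, neg_sq] using hw2

lemma flux_diff_le {d : ℕ} {lam : ℝ} {A B : Fin d → Fin d → ℝ} (hA : IsElliptic d lam A)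
    (hB : IsElliptic d lam B) (v : Fin d → ℝ) :
    vnorm (mulVec' B v - mulVec' A v) ≤ 2 * vnorm v := by
  have := vnorm_sub_le (mulVec' B v) (mulVec' A v)
  linarith [hA.2 v, hB.2 v]

/-- Lemma 3, estimate on `osc φ_T`: the oscillation of the modified
corrector at the origin is controlled by the gradient of the Green's function
(in its pole variable) and the gradient of the corrector. -/
theorem statement6 (d : ℕ) (hd : 2 ≤ d) (lam : ℝ) (hlam0 : 0 < lam) (hlam1 : lam ≤ 1) :
    ∃ C : ℝ, 0 < C ∧
      ∀ T : ℝ, 0 < T → ∀ ξ : Fin d → ℝ,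
      ∀ φT : Coeff d lam → Lat d → ℝ,
        (∀ a : Coeff d lam, IsModCorrector d T ξ a.1 (φT a)) →
      ∀ G : Coeff d lam → Lat d → Lat d → ℝ,
        (∀ (a : Coeff d lam) (y : Lat d), IsGreen d T a.1 y (fun x => G a x y)) →
      ∀ (a : Coeff d lam) (x : Lat d),
        osc (fun b => φT b 0) a x
          ≤ C * vnorm (fun i => G a 0 (x + unitv d i) - G a 0 x)
              * vnorm (fun i => dgrad (φT a) x i + ξ i) := by
  refine ⟨4 * (1 + 2 / lam), by positivity, ?_⟩
  intro T hT ξ φT hφ G hG a x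
  set g := vnorm (fun i => G a 0 (x + unitv d i) - G a 0 x) with hg
  have hg0 : 0 ≤ g := vnorm_nonneg _
  change osc (fun b => φT b 0) a x ≤ 4 * (1 + 2 / lam) * g * vnorm (dgrad (φT a) x + ξ)
  set p := vnorm (dgrad (φT a) x + ξ) with hp
  have key : ∀ b ∈ sameOutside a x, |φT b 0 - φT a 0| ≤ 2 * (1 + 2 / lam) * g * p := by
    intro b hb
    have hbd : ∀ c e : Coeff d lam, ∃ M, ∀ y, |(φT c - φT e) y| ≤ M := by
      intro c e
      obtain ⟨M, hM⟩ := (hφ c).1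
      obtain ⟨N, hN⟩ := (hφ e).1
      exact ⟨M + N, fun y => (abs_sub _ _).trans (add_le_add (hM y) (hN y))⟩
    have hba : ∀ y, y ≠ x → a.1 y = b.1 y := fun y hy => (hb y hy).symm
    have e1 := corrector_diff hb (hφ a) (hφ b)
    have e2 := corrector_diff hba (hφ b) (hφ a)
    obtain ⟨-, r1⟩ := green_representation hlam0 hT a (G a) (hG a) x _ _ (hbd b a) e1
    obtain ⟨s2, -⟩ := green_representation hlam0 hT b (G b) (hG b) x _ _ (hbd a b) e2
    have en := energy_estimate hlam0 hT b x _ _ s2 e2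
    have k2 := flux_diff_le (b.2 x) (a.2 x) (dgrad (φT a) x + ξ)
    have hgrad : vnorm (dgrad (φT a - φT b) x) ≤ 2 / lam * p := by
      rw [div_mul_eq_mul_div, le_div_iff₀ hlam0]
      linarith
    have hpb : vnorm (dgrad (φT b) x + ξ) ≤ (1 + 2 / lam) * p := by
      have e3 : dgrad (φT b) x + ξ = (dgrad (φT a) x + ξ) - dgrad (φT a - φT b) x := by
        rw [dgrad_sub]; abel
      rw [e3]
      linarith [vnorm_sub_le (dgrad (φT a) x + ξ) (dgrad (φT a - φT b) x)]
    have k1 := flux_diff_le (a.2 x) (b.2 x) (dgrad (φT b) x + ξ)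
    have r0 := r1 0
    rw [Pi.sub_apply] at r0
    rw [r0, abs_neg]
    refine (abs_sum_mul_le _ _).trans ?_
    calc _ ≤ (2 * ((1 + 2 / lam) * p)) * g :=
          mul_le_mul_of_nonneg_right (k1.trans (by linarith)) hg0
      _ = _ := by ring
  have hne : ((fun b => φT b 0) '' sameOutside a x).Nonempty := ⟨_, a, fun _ _ => rfl, rfl⟩
  have hsup : sSup ((fun b => φT b 0) '' sameOutside a x)
      ≤ φT a 0 + 2 * (1 + 2 / lam) * g * p := by
    refine csSup_le hne ?_
    rintro _ ⟨b, hb, rfl⟩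
    linarith [(abs_le.mp (key b hb)).2]
  have hinf : φT a 0 - 2 * (1 + 2 / lam) * g * p
      ≤ sInf ((fun b => φT b 0) '' sameOutside a x) := by
    refine le_csInf hne ?_
    rintro _ ⟨b, hb, rfl⟩
    linarith [(abs_le.mp (key b hb)).1]
  unfold osc
  linarith
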